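/- arXiv:2309.01990 — 2 statements merged into one kernel-verified Lean document; each statement's English description precedes it below -/
import Mathlib

section
/- Let u_f > 0, w > 0, ρ_j > 0, ρ_c = w · ρ_j / (u_f + w), and 2·ρ_c ≤ ρ_T ≤ ρ_j + ρ_c. Define g(ρ1) = min(u_f · ρ1, w · (ρ_j − ρ1)) + min(u_f · (ρ_T − ρ1), w · (ρ_j − ρ_T + ρ1)). Then for ρ1 with max(0, ρ_T − ρ_j) ≤ ρ1 ≤ min(ρ_T, ρ_j), equality g(ρ1) = w · (2·ρ_j − ρ_T) holds if and only if ρ_c ≤ ρ1 ≤ ρ_T − ρ_c. In particular the maximum is achieved at ρ1 = ρ_c (HOT lanes exactly at critical density), at ρ1 = ρ_T − ρ_c (general-purpose lanes exactly at critical density), and at all intermediate points where both lane groups are congested. -/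
/-! The congested branch `w * (ρ_j - ρ)` bounds the flow from above, and the flow lies on it exactly
when `ρ` is at least the critical density. The congested branches of the two lane groups add up to
the constant `w * (2 * ρ_j - ρ_T)`, so the total flow equals this constant iff both lane groups are
on the congested branch. -/

section FundamentalDiagram

variable {K : Type*} [Field K]

/-- The density at which the free-flow branch `u_f * ρ` and the congested branch `w * (ρ_j - ρ)` of
the triangular fundamental diagram cross; a junk value if `u_f + w = 0`. -/
def criticalDensity (u_f w ρ_j : K) : K :=
  w * ρ_j / (u_f + w)

variable [LinearOrder K]

/-- The triangular fundamental diagram: flow as a function of the per-lane density `ρ`, with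
free-flow speed `u_f`, shockwave speed `w` and jam density `ρ_j`. The density is not restricted to
the physical range between `0` and `ρ_j`. -/
def triangularFlow (u_f w ρ_j ρ : K) : K :=
  min (u_f * ρ) (w * (ρ_j - ρ))

theorem triangularFlow_le_congested (u_f w ρ_j ρ : K) :
    triangularFlow u_f w ρ_j ρ ≤ w * (ρ_j - ρ) :=
  min_le_right _ _

variable [IsStrictOrderedRing K] {u_f w : K}

theorem criticalDensity_le_iff (hspeed : 0 < u_f + w) (ρ_j ρ : K) :
    criticalDensity u_f w ρ_j ≤ ρ ↔ w * (ρ_j - ρ) ≤ u_f * ρ := by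
  rw [criticalDensity, div_le_iff₀ hspeed, mul_sub, sub_le_iff_le_add, mul_add, mul_comm ρ u_f,
    mul_comm ρ w]

theorem triangularFlow_eq_congested_iff (hspeed : 0 < u_f + w) (ρ_j ρ : K) :
    triangularFlow u_f w ρ_j ρ = w * (ρ_j - ρ) ↔ criticalDensity u_f w ρ_j ≤ ρ := by
  rw [triangularFlow, min_eq_right_iff, criticalDensity_le_iff hspeed]

theorem triangularFlow_add_eq_congested_iff (hspeed : 0 < u_f + w) (ρ_j ρ₁ ρ₂ : K) :
    triangularFlow u_f w ρ_j ρ₁ + triangularFlow u_f w ρ_j ρ₂ = w * (2 * ρ_j - (ρ₁ + ρ₂)) ↔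
      criticalDensity u_f w ρ_j ≤ ρ₁ ∧ criticalDensity u_f w ρ_j ≤ ρ₂ := by
  have congested_add : w * (2 * ρ_j - (ρ₁ + ρ₂)) = w * (ρ_j - ρ₁) + w * (ρ_j - ρ₂) := by ring
  rw [congested_add, add_eq_add_iff_eq_and_eq (triangularFlow_le_congested u_f w ρ_j ρ₁)
    (triangularFlow_le_congested u_f w ρ_j ρ₂), triangularFlow_eq_congested_iff hspeed,
    triangularFlow_eq_congested_iff hspeed]

theorem max_outflow_maximizer_characterization_general (hspeed : 0 < u_f + w) (ρ_j ρ_T ρ₁ : K) :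
    triangularFlow u_f w ρ_j ρ₁ + triangularFlow u_f w ρ_j (ρ_T - ρ₁) = w * (2 * ρ_j - ρ_T) ↔
      criticalDensity u_f w ρ_j ≤ ρ₁ ∧ ρ₁ ≤ ρ_T - criticalDensity u_f w ρ_j := by
  rw [le_sub_comm, ← triangularFlow_add_eq_congested_iff hspeed, add_sub_cancel]

end FundamentalDiagram

/-- Lemma IV.1 / Corollary IV.2 (maximizer characterization): with
2ρc ≤ ρT ≤ ρj + ρc, the outflow g(ρ1) attains the maximum w·(2ρj − ρT) exactly
when ρc ≤ ρ1 ≤ ρT − ρc. -/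
theorem max_outflow_maximizer_characterization
    (u_f w ρ_j ρ_T : ℝ) (huf : 0 < u_f) (hw : 0 < w) (hρj : 0 < ρ_j)
    (hlow : 2 * (w * ρ_j / (u_f + w)) ≤ ρ_T)
    (hhigh : ρ_T ≤ ρ_j + w * ρ_j / (u_f + w))
    (g : ℝ → ℝ)
    (hg : ∀ ρ1, g ρ1 = min (u_f * ρ1) (w * (ρ_j - ρ1)) +
      min (u_f * (ρ_T - ρ1)) (w * (ρ_j - ρ_T + ρ1))) :
    ∀ ρ1, max 0 (ρ_T - ρ_j) ≤ ρ1 → ρ1 ≤ min ρ_T ρ_j →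
      (g ρ1 = w * (2 * ρ_j - ρ_T) ↔
        w * ρ_j / (u_f + w) ≤ ρ1 ∧ ρ1 ≤ ρ_T - w * ρ_j / (u_f + w)) := by
  intro ρ1 _ _
  rw [hg, sub_add]
  exact max_outflow_maximizer_characterization_general (add_pos huf hw) ρ_j ρ_T ρ1
end

section
/- Let H > 0, L1 > 0, K1 > 0, and J, K2 ∈ ℝ with K2 · L1 > J. Consider the linearized closed-loop matrix M = [[ (J − K2·L1)/(L1·H), K1/H ], [ −1/L1, 0 ]]. Then every complex eigenvalue μ of M (i.e., every complex root of μ² − ((J − K2·L1)/(L1·H))·μ + K1/(L1·H) = 0) satisfies Re(μ) < 0; hence the linearized system [ξ′; λ′] = M·[ξ; λ] is asymptotically stable. In particular, when J ≤ 0 (strictly under-critical phase) this holds for all K1, K2 > 0, and when J > 0 (strictly over-critical phase) it holds whenever K2 > J/L1. -/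
/-!
Write the characteristic equation as `μ² - t μ + d = 0`, with `t < 0` the trace and `d > 0` the
determinant. Multiplying by `conj μ` gives `|μ|² μ - t |μ|² + d conj μ = 0`, whose real part is
`(|μ|² + d) Re μ = t |μ|²`. As `d ≠ 0` forces `μ ≠ 0`, the right-hand side is negative, and so is
`Re μ`.
-/

open scoped ComplexConjugate

section RealQuadratic

variable {t d : ℝ} {z : ℂ}

theorem normSq_add_mul_re_eq_of_quadratic_root (hz : z ^ 2 - t * z + d = 0) :
    (Complex.normSq z + d) * z.re = t * Complex.normSq z := by
  have conj_mul_root : Complex.normSq z * z - t * Complex.normSq z + d * conj z = 0 := by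
    rw [Complex.normSq_eq_conj_mul_self]
    linear_combination conj z * hz
  have re_part : Complex.normSq z * z.re - t * Complex.normSq z + d * z.re = 0 := by
    simpa using congrArg Complex.re conj_mul_root
  linear_combination re_part

theorem re_neg_of_quadratic_root (ht : t < 0) (hd : 0 < d) (hz : z ^ 2 - t * z + d = 0) :
    z.re < 0 := by
  have z_ne_zero : z ≠ 0 := by
    rintro rfl
    exact hd.ne' (by simpa using hz)
  have normSq_pos : 0 < Complex.normSq z := Complex.normSq_pos.mpr z_ne_zero
  have product_neg : (Complex.normSq z + d) * z.re < 0 := by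
    rw [normSq_add_mul_re_eq_of_quadratic_root hz]
    exact mul_neg_of_neg_of_pos ht normSq_pos
  exact neg_of_mul_neg_right product_neg (add_pos normSq_pos hd).le

end RealQuadratic

/-- Lemma V.3: the linearized closed-loop matrix
M = [[(J − K2·L1)/(L1·H), K1/H], [−1/L1, 0]] is Hurwitz whenever H, L1, K1 > 0
and K2·L1 > J: every complex root of the characteristic polynomial
μ² − ((J − K2·L1)/(L1·H))·μ + K1/(L1·H) = 0 has negative real part. -/
theorem linearized_closed_loop_stable
    (H L1 K1 J K2 : ℝ) (hH : 0 < H) (hL1 : 0 < L1) (hK1 : 0 < K1)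
    (hK2 : J < K2 * L1) :
    ∀ μ : ℂ, μ ^ 2 - (((J - K2 * L1) / (L1 * H) : ℝ) : ℂ) * μ
        + ((K1 / (L1 * H) : ℝ) : ℂ) = 0 → μ.re < 0 := by
  intro μ hμ
  have trace_neg : (J - K2 * L1) / (L1 * H) < 0 :=
    div_neg_of_neg_of_pos (sub_neg.mpr hK2) (mul_pos hL1 hH)
  have det_pos : 0 < K1 / (L1 * H) := div_pos hK1 (mul_pos hL1 hH)
  exact re_neg_of_quadratic_root trace_neg det_pos hμ
end
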